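/- The α-limit set (taken in [0,1]³, as λ → −∞) of every interior orbit of the Einstein–Vlasov dynamical system is contained in the union of the face {Ω = 1}, the line L₁ = {(1, 0, Ω₀) : Ω₀ ∈ (0,1)}, and the line L₂ = {((3+2l)/(4+2l), 0, Ω₀) : Ω₀ ∈ (0,1)}. -/

import Mathlib

open Filter Set

/-!
Backward in time `Ω` increases, so it converges. If its limit is below `1`, the radial variable
`η` increases to some `η∞ ∈ (0, ∞)` and the coefficients `σ(η)`, `σ'(η)` stay bounded. Since `Ω` is
convergent and `-dΩ/dλ` dominates a multiple of `V`, whose relative growth rate is bounded,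
`V → 0`. What remains is a perturbation of the logistic equation
`dU/dλ = U (1 - U) (3 + 2l - (4 + 2l) U)`, whose interior equilibrium attracts and hence repels
backward in time: any cluster point of `U` other than the equilibrium forces `U → 0` or `U → 1`. The
former is impossible because near `U = V = 0` the equation for `V` reads `dV/dλ ≈ -V`, so that `V`
grows backward in time.
-/

open Asymptotics Topology

/-! ### Scalar differential inequalities -/

lemma mul_exp_le_of_mul_le_deriv {X x : ℝ → ℝ} {c s t : ℝ} (hst : s ≤ t)
    (hX : ∀ r ∈ Icc s t, HasDerivAt X (x r) r) (hx : ∀ r ∈ Icc s t, c * X r ≤ x r) :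
    X s * Real.exp (c * (t - s)) ≤ X t := by
  have hneg := le_gronwallBound_of_liminf_deriv_right_le (f := fun r => -X r)
    (f' := fun r => -x r) (δ := -X s) (K := c) (ε := 0)
    (fun r hr => (hX r hr).neg.continuousAt.continuousWithinAt)
    (fun r hr _ => (hX r (Ico_subset_Icc_self hr)).neg.hasDerivWithinAt.liminf_right_slope_le)
    le_rfl (fun r hr => by linarith [hx r (Ico_subset_Icc_self hr)]) t (right_mem_Icc.2 hst)
  rw [gronwallBound_ε0] at hneg
  linarith

lemma le_of_deriv_pos_of_eq {X x : ℝ → ℝ} {q s t : ℝ}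
    (hX : ∀ r ∈ Icc s t, HasDerivAt X (x r) r) (hx : ∀ r ∈ Icc s t, X r = q → 0 < x r)
    (hst : s ≤ t) (ht : X t ≤ q) : X s ≤ q := by
  have hmem : ∀ r ∈ Icc 0 (t - s), t - r ∈ Icc s t := fun r hr =>
    ⟨by linarith [hr.2], by linarith [hr.1]⟩
  have hrev : ∀ r ∈ Icc 0 (t - s), HasDerivAt (fun r => X (t - r)) (-x (t - r)) r := fun r hr =>
    (hX _ (hmem r hr)).comp_const_sub t r
  have hle := image_le_of_deriv_right_lt_deriv_boundary (B := fun _ => q) (B' := fun _ => 0)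
    (fun r hr => (hrev r hr).continuousAt.continuousWithinAt)
    (fun r hr => (hrev r (Ico_subset_Icc_self hr)).hasDerivWithinAt) (by simpa using ht)
    (fun r => hasDerivAt_const r q)
    (fun r hr heq => neg_neg_of_pos (hx _ (hmem r (Ico_subset_Icc_self hr)) heq))
    (right_mem_Icc.2 (sub_nonneg.2 hst))
  simpa using hle

lemma tendsto_zero_atBot_of_mul_le_deriv {X x : ℝ → ℝ} {c : ℝ} (hc : 0 < c)
    (hX : ∀ t, HasDerivAt X (x t) t) (hX0 : ∀ t, 0 ≤ X t) (hx : ∀ᶠ t in atBot, c * X t ≤ x t) :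
    Tendsto X atBot (𝓝 0) := by
  obtain ⟨T, hT⟩ := eventually_atBot.1 hx
  have hbound : ∀ s ≤ T, X s ≤ X T * Real.exp (c * (s - T)) := fun s hs => by
    have hexp := mul_exp_le_of_mul_le_deriv hs (fun r _ => hX r) (fun r hr => hT r hr.2)
    rwa [← le_div_iff₀ (Real.exp_pos _), div_eq_mul_inv, ← Real.exp_neg, ← mul_neg, neg_sub] at hexp
  have hlin : Tendsto (fun s => c * (s - T)) atBot atBot :=
    (tendsto_atBot_add_const_right _ (-T) tendsto_id).const_mul_atBot hc
  refine squeeze_zero' (Eventually.of_forall hX0) ((eventually_le_atBot T).mono hbound) ?_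
  simpa using (Real.tendsto_exp_atBot.comp hlin).const_mul (X T)

lemma tendsto_zero_atBot_of_frequently_le {X x : ℝ → ℝ} {c q : ℝ} (hc : 0 < c)
    (hX : ∀ t, HasDerivAt X (x t) t) (hX0 : ∀ t, 0 < X t)
    (hx : ∀ᶠ t in atBot, X t ≤ q → c * X t ≤ x t) (hq : ∃ᶠ t in atBot, X t ≤ q) :
    Tendsto X atBot (𝓝 0) := by
  obtain ⟨T, hT⟩ := eventually_atBot.1 hx
  obtain ⟨t₁, hqt₁, ht₁⟩ := (hq.and_eventually (eventually_le_atBot T)).exists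
  have htrap : ∀ s ≤ t₁, X s ≤ q := fun s hs =>
    le_of_deriv_pos_of_eq (fun r _ => hX r)
      (fun r hr hreq => (mul_pos hc (hX0 r)).trans_le (hT r (hr.2.trans ht₁) hreq.le)) hs hqt₁
  refine tendsto_zero_atBot_of_mul_le_deriv hc hX (fun t => (hX0 t).le) ?_
  filter_upwards [eventually_le_atBot t₁] with s hs
  exact hT s (hs.trans ht₁) (htrap s hs)

lemma not_tendsto_zero_atBot_of_deriv_nonpos {X x : ℝ → ℝ} (hX : ∀ t, HasDerivAt X (x t) t)
    (hX0 : ∀ t, 0 < X t) (hx : ∀ᶠ t in atBot, x t ≤ 0) : ¬ Tendsto X atBot (𝓝 0) := by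
  intro hlim
  obtain ⟨T, hT⟩ := eventually_atBot.1 hx
  have hanti : AntitoneOn X (Iic T) := by
    refine antitoneOn_of_deriv_nonpos (convex_Iic T)
      (fun t _ => (hX t).continuousAt.continuousWithinAt)
      (fun t _ => (hX t).differentiableAt.differentiableWithinAt) fun t ht => ?_
    rw [(hX t).deriv]
    exact hT t (interior_subset (s := Iic T) ht)
  have hle : X T ≤ 0 := ge_of_tendsto hlim <|
    (eventually_le_atBot T).mono fun t ht => hanti ht self_mem_Iic ht
  exact (hX0 T).not_ge hle

lemma tendsto_zero_atBot_of_mul_le_neg_deriv {V v W w : ℝ → ℝ} {a c C : ℝ} (hc : 0 < c) (hC : 0 ≤ C)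
    (hV : ∀ t, HasDerivAt V (v t) t) (hW : ∀ t, HasDerivAt W (w t) t) (hV0 : ∀ t, 0 ≤ V t)
    (hv : ∀ᶠ t in atBot, -C * V t ≤ v t) (hw : ∀ᶠ t in atBot, c * V t ≤ -w t)
    (ha : Tendsto W atBot (𝓝 a)) : Tendsto V atBot (𝓝 0) := by
  obtain ⟨T, hT⟩ := eventually_atBot.1 (hv.and hw)
  have hbound : ∀ t ≤ T - 1, V t ≤ (W t - W (t + 1)) / c * Real.exp C := by
    intro t ht
    obtain ⟨ξ, hξ, hslope⟩ := exists_hasDerivAt_eq_slope W w (lt_add_one t)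
      (fun s _ => (hW s).continuousAt.continuousWithinAt) (fun s _ => hW s)
    have hVξ : V ξ ≤ (W t - W (t + 1)) / c := by
      rw [le_div_iff₀ hc]
      rw [add_sub_cancel_left, div_one] at hslope
      linarith [(hT ξ (by linarith [hξ.2])).2]
    have hgrowth : V t * Real.exp (-C * (ξ - t)) ≤ V ξ :=
      mul_exp_le_of_mul_le_deriv hξ.1.le (fun r _ => hV r)
        (fun r hr => (hT r (by linarith [hr.2, hξ.2])).1)
    have hexp : Real.exp (-C) ≤ Real.exp (-C * (ξ - t)) :=
      Real.exp_le_exp.2 (by nlinarith [hξ.2])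
    calc V t = V t * Real.exp (-C) * Real.exp C := by
          rw [mul_assoc, ← Real.exp_add, neg_add_cancel, Real.exp_zero, mul_one]
      _ ≤ V t * Real.exp (-C * (ξ - t)) * Real.exp C := by gcongr; exact hV0 t
      _ ≤ (W t - W (t + 1)) / c * Real.exp C := by gcongr; exact hgrowth.trans hVξ
  have hshift : Tendsto (fun t => W (t + 1)) atBot (𝓝 a) :=
    ha.comp (tendsto_atBot_add_const_right _ 1 tendsto_id)
  refine squeeze_zero' (Eventually.of_forall hV0) ((eventually_le_atBot _).mono hbound) ?_
  simpa using ((ha.sub hshift).div_const c).mul_const (Real.exp C)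

/-! ### Asymptotically logistic equations -/

section Logistic

variable {X r : ℝ → ℝ} {α β : ℝ}

lemma tendsto_zero_atBot_of_logistic {q : ℝ}
    (hX : ∀ t, HasDerivAt X (X t * (1 - X t) * r t) t) (hX01 : ∀ t, X t ∈ Ioo (0 : ℝ) 1)
    (hr : Tendsto (fun t => r t - (α - β * X t)) atBot (𝓝 0)) (hβ : 0 ≤ β) (hqβ : β * q < α)
    (hq1 : q < 1) (hq : ∃ᶠ t in atBot, X t ≤ q) : Tendsto X atBot (𝓝 0) := by
  have hδ : 0 < (α - β * q) / 2 := by linarith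
  refine tendsto_zero_atBot_of_frequently_le (mul_pos (sub_pos.2 hq1) hδ) hX
    (fun t => (hX01 t).1) ?_ hq
  filter_upwards [hr.eventually_const_lt (neg_neg_of_pos hδ)] with t ht hXq
  obtain ⟨hX0, hX1⟩ := hX01 t
  have hrate : (α - β * q) / 2 ≤ r t := by linarith [mul_le_mul_of_nonneg_left hXq hβ]
  calc (1 - q) * ((α - β * q) / 2) * X t ≤ (1 - X t) * r t * X t := by gcongr
    _ = X t * (1 - X t) * r t := by ring

lemma tendsto_or_eq_of_mapClusterPt_of_logistic {x : ℝ}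
    (hX : ∀ t, HasDerivAt X (X t * (1 - X t) * r t) t) (hX01 : ∀ t, X t ∈ Ioo (0 : ℝ) 1)
    (hr : Tendsto (fun t => r t - (α - β * X t)) atBot (𝓝 0)) (hα : 0 < α) (hαβ : α < β)
    (hx : MapClusterPt x atBot X) :
    Tendsto X atBot (𝓝 0) ∨ x = α / β ∨ Tendsto X atBot (𝓝 1) := by
  have hβ : 0 < β := hα.trans hαβ
  rcases lt_trichotomy x (α / β) with hlt | heq | hgt
  · obtain ⟨q, hxq, hqβ⟩ := exists_between hlt
    exact .inl <| tendsto_zero_atBot_of_logistic hX hX01 hr hβ.le ((lt_div_iff₀' hβ).1 hqβ)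
      (hqβ.trans ((div_lt_one hβ).2 hαβ)) ((hx.frequently (eventually_lt_nhds hxq)).mono
        fun _ => le_of_lt)
  · exact .inr (.inl heq)
  · obtain ⟨q, hqβ, hqx⟩ := exists_between hgt
    have hq0 : 0 < q := (div_pos hα hβ).trans hqβ
    have hY : ∀ t, HasDerivAt (fun t => 1 - X t) ((1 - X t) * (1 - (1 - X t)) * -r t) t :=
      fun t => ((hX t).const_sub 1).congr_deriv (by ring)
    have hrY : Tendsto (fun t => -r t - (β - α - β * (1 - X t))) atBot (𝓝 0) := by
      refine (neg_zero (G := ℝ) ▸ hr.neg).congr fun t => ?_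
      ring
    have hlim : Tendsto (fun t => 1 - X t) atBot (𝓝 0) :=
      tendsto_zero_atBot_of_logistic (q := 1 - q) hY
        (fun t => ⟨sub_pos.2 (hX01 t).2, sub_lt_self _ (hX01 t).1⟩) hrY hβ.le
        (by linarith [(div_lt_iff₀' hβ).1 hqβ]) (sub_lt_self _ hq0)
        ((hx.frequently (eventually_gt_nhds hqx)).mono fun _ h => sub_le_sub_left h.le 1)
    exact .inr (.inr (by simpa using hlim.const_sub 1))

end Logistic

/-! ### Cluster points and monotone reparametrizations -/

lemma eq_of_mapClusterPt_of_tendsto {ι Y : Type*} [TopologicalSpace Y] [T2Space Y] {l : Filter ι}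
    {u : ι → Y} {x y : Y} (hx : MapClusterPt x l u) (hy : Tendsto u l (𝓝 y)) : x = y :=
  eq_of_nhds_neBot (ClusterPt.mono hx hy)

lemma exists_pos_tendsto_atBot_of_antitone_comp {g E : ℝ → ℝ} {a m : ℝ}
    (hg : StrictMonoOn g (Ioi 0)) (hgm : Tendsto g atTop (𝓝 m)) (hE : ∀ t, 0 < E t)
    (hanti : Antitone fun t => g (E t)) (ha : ∀ t, g (E t) ≤ a) (ham : a < m) :
    ∃ η > 0, Tendsto E atBot (𝓝 η) := by
  have hEanti : Antitone E := fun s t hst => (hg.le_iff_le (hE t) (hE s)).1 (hanti hst)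
  obtain ⟨b, hb⟩ := eventually_atTop.1 (hgm.eventually_const_lt ham)
  have hbdd : BddAbove (range E) :=
    ⟨b, forall_mem_range.2 fun t => le_of_not_ge fun hbE => (hb _ hbE).not_ge (ha t)⟩
  have hlim := tendsto_atBot_ciSup hEanti hbdd
  exact ⟨_, (hE 0).trans_le (hEanti.ge_of_tendsto hlim 0), hlim⟩

lemma tendsto_atBot_of_antitone_of_mapClusterPt {ι Y : Type*} [Preorder ι]
    [ConditionallyCompleteLinearOrder Y] [TopologicalSpace Y] [OrderTopology Y] {u : ι → Y} {y : Y}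
    (hu : Antitone u) (hbdd : BddAbove (range u)) (hy : MapClusterPt y atBot u) :
    Tendsto u atBot (𝓝 y) := by
  have hlim := tendsto_atBot_ciSup hu hbdd
  rwa [← eq_of_mapClusterPt_of_tendsto hy hlim] at hlim

section Growth

variable {ω ω' : ℝ → ℝ} {c : ℝ}

lemma strictMonoOn_Ioi_of_mul_le_deriv (hc : 0 < c) (hω : ∀ η, 0 < η → HasDerivAt ω (ω' η) η)
    (hω0 : ∀ η, 0 < η → 0 < ω η) (hω' : ∀ η, 0 < η → c * ω η ≤ ω' η) :
    StrictMonoOn ω (Ioi 0) := by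
  refine strictMonoOn_of_deriv_pos (convex_Ioi 0)
    (fun η hη => (hω η hη).continuousAt.continuousWithinAt) fun η hη => ?_
  have hη0 : 0 < η := interior_subset hη
  rw [(hω η hη0).deriv]
  exact (mul_pos hc (hω0 η hη0)).trans_le (hω' η hη0)

lemma tendsto_atTop_of_mul_le_deriv (hc : 0 < c) (hω : ∀ η, 0 < η → HasDerivAt ω (ω' η) η)
    (hω0 : ∀ η, 0 < η → 0 < ω η) (hω' : ∀ η, 0 < η → c * ω η ≤ ω' η) :
    Tendsto ω atTop atTop := by
  have hlin : Tendsto (fun η : ℝ => c * (η - 1)) atTop atTop :=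
    (tendsto_atTop_add_const_right _ (-1) tendsto_id).const_mul_atTop hc
  refine tendsto_atTop_mono' _ ?_
    ((Real.tendsto_exp_atTop.comp hlin).const_mul_atTop (hω0 1 one_pos))
  filter_upwards [eventually_ge_atTop 1] with η hη
  exact mul_exp_le_of_mul_le_deriv hη (fun r hr => hω r (one_pos.trans_le hr.1))
    (fun r hr => hω' r (one_pos.trans_le hr.1))

end Growth

lemma div_one_add_eq_one_sub_inv {x : ℝ} (hx : 0 < x) : x / (1 + x) = 1 - (1 + x)⁻¹ := by
  field_simp
  ring

lemma div_one_add_mem_Ioo {x : ℝ} (hx : 0 < x) : x / (1 + x) ∈ Ioo (0 : ℝ) 1 :=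
  ⟨by positivity, (div_lt_one (by positivity)).2 (lt_one_add x)⟩

lemma strictMonoOn_div_one_add : StrictMonoOn (fun x : ℝ => x / (1 + x)) (Ioi 0) := by
  intro x (hx : 0 < x) y (hy : 0 < y) hxy
  simp only [div_one_add_eq_one_sub_inv hx, div_one_add_eq_one_sub_inv hy]
  gcongr

lemma tendsto_div_one_add_atTop : Tendsto (fun x : ℝ => x / (1 + x)) atTop (𝓝 1) := by
  have hinv : Tendsto (fun x : ℝ => (1 + x)⁻¹) atTop (𝓝 0) :=
    tendsto_inv_atTop_zero.comp (tendsto_atTop_add_const_left _ 1 tendsto_id)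
  have hlim : Tendsto (fun x : ℝ => 1 - (1 + x)⁻¹) atTop (𝓝 1) := by simpa using hinv.const_sub 1
  refine hlim.congr' ?_
  filter_upwards [eventually_gt_atTop 0] with x hx
  exact (div_one_add_eq_one_sub_inv hx).symm

/-! ### Orbits with prescribed coefficients -/

/-- The factor `H = (1 - U + σU)V` of the Einstein–Vlasov system, with `s` standing for `σ`. -/
def matterFactor (s u v : ℝ) : ℝ := (1 - u + s * u) * v

/-- The factor multiplying `U(1 - U)` in the equation for `U`, with `s`, `d` standing for
`σ`, `σ'`. -/
def rateU (l s d u v : ℝ) : ℝ :=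
  (3 + 2 * l - (4 + 2 * l) * u) * (1 - v) - (1 + s - d) * matterFactor s u v

/-- The factor multiplying `V(1 - V)` in the equation for `V`, with `s`, `d` standing for
`σ`, `σ'`. -/
def rateV (s d u v : ℝ) : ℝ :=
  (2 * u - 1) * (1 - v + 2 * s * v) + d * matterFactor s u v

/-- A solution of the Einstein–Vlasov system in the open cube. The coefficients `σ(η)`, `σ'(η)` and
`F(η)` are replaced by arbitrary functions `s`, `d` and `f` of the time `λ`, since the analysis of
`U` and `V` only needs bounds on them. -/
structure InteriorOrbit (l : ℝ) (s d f U V Ω : ℝ → ℝ) : Prop where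
  U_mem : ∀ t, U t ∈ Ioo (0 : ℝ) 1
  V_mem : ∀ t, V t ∈ Ioo (0 : ℝ) 1
  Ω_mem : ∀ t, Ω t ∈ Ioo (0 : ℝ) 1
  hasDerivAt_U : ∀ t, HasDerivAt U (U t * (1 - U t) * rateU l (s t) (d t) (U t) (V t)) t
  hasDerivAt_V : ∀ t, HasDerivAt V (V t * (1 - V t) * rateV (s t) (d t) (U t) (V t)) t
  hasDerivAt_Ω : ∀ t,
    HasDerivAt Ω (-(Ω t * (1 - Ω t) * f t * matterFactor (s t) (U t) (V t))) t

lemma min_mul_le_matterFactor {s u v : ℝ} (hu : u ∈ Icc (0 : ℝ) 1) (hv : 0 ≤ v) :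
    min 1 s * v ≤ matterFactor s u v := by
  have hconv : min 1 s ≤ (1 - u) * 1 + u * s :=
    Convex.min_le_combo 1 s (sub_nonneg.2 hu.2) hu.1 (sub_add_cancel 1 u)
  exact mul_le_mul_of_nonneg_right (by linarith) hv

namespace InteriorOrbit

variable {l : ℝ} {s d f U V Ω : ℝ → ℝ}

lemma antitone_Ω (h : InteriorOrbit l s d f U V Ω) (hs : ∀ t, 0 < s t) (hf : ∀ t, 0 ≤ f t) :
    Antitone Ω := by
  refine antitone_of_deriv_nonpos (fun t => (h.hasDerivAt_Ω t).differentiableAt) fun t => ?_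
  have hH : 0 ≤ matterFactor (s t) (U t) (V t) :=
    (mul_pos (lt_min one_pos (hs t)) (h.V_mem t).1).le.trans
      (min_mul_le_matterFactor (Ioo_subset_Icc_self (h.U_mem t)) (h.V_mem t).1.le)
  have hΩ := h.Ω_mem t
  rw [(h.hasDerivAt_Ω t).deriv, neg_nonpos]
  exact mul_nonneg (mul_nonneg (mul_nonneg hΩ.1.le (sub_nonneg.2 hΩ.2.le)) (hf t)) hH

lemma isBigO_one_U (h : InteriorOrbit l s d f U V Ω) : U =O[atBot] fun _ => (1 : ℝ) :=
  .of_bound' <| .of_forall fun t => by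
    simpa [abs_of_pos (h.U_mem t).1] using (h.U_mem t).2.le

lemma isBigO_one_V (h : InteriorOrbit l s d f U V Ω) : V =O[atBot] fun _ => (1 : ℝ) :=
  .of_bound' <| .of_forall fun t => by
    simpa [abs_of_pos (h.V_mem t).1] using (h.V_mem t).2.le

lemma isBigO_matterFactor (h : InteriorOrbit l s d f U V Ω)
    (hs : s =O[atBot] fun _ => (1 : ℝ)) :
    (fun t => matterFactor (s t) (U t) (V t)) =O[atBot] V := by
  have hfac : (fun t => 1 - U t + s t * U t) =O[atBot] fun _ => (1 : ℝ) :=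
    ((isBigO_refl _ _).sub h.isBigO_one_U).add (by simpa using hs.mul h.isBigO_one_U)
  simpa [matterFactor] using hfac.mul (isBigO_refl V atBot)

lemma isBigO_rateU_sub (h : InteriorOrbit l s d f U V Ω)
    (hs : s =O[atBot] fun _ => (1 : ℝ)) (hd : d =O[atBot] fun _ => (1 : ℝ)) :
    (fun t => rateU l (s t) (d t) (U t) (V t) - (3 + 2 * l - (4 + 2 * l) * U t)) =O[atBot] V := by
  have hlin : (fun t => 3 + 2 * l - (4 + 2 * l) * U t) =O[atBot] fun _ => (1 : ℝ) :=
    (isBigO_const_const _ one_ne_zero _).sub (h.isBigO_one_U.const_mul_left _)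
  have hcoef : (fun t => 1 + s t - d t) =O[atBot] fun _ => (1 : ℝ) :=
    ((isBigO_refl _ _).add hs).sub hd
  have hsum : (fun t => -((3 + 2 * l - (4 + 2 * l) * U t) * V t) -
      (1 + s t - d t) * matterFactor (s t) (U t) (V t)) =O[atBot] V := by
    simpa using (hlin.mul (isBigO_refl V atBot)).neg_left.sub
      (hcoef.mul (h.isBigO_matterFactor hs))
  refine hsum.congr_left fun t => ?_
  rw [rateU]
  ring

lemma isBigO_rateV_sub (h : InteriorOrbit l s d f U V Ω)
    (hs : s =O[atBot] fun _ => (1 : ℝ)) (hd : d =O[atBot] fun _ => (1 : ℝ)) :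
    (fun t => rateV (s t) (d t) (U t) (V t) - (2 * U t - 1)) =O[atBot] V := by
  have hU : (fun t => 2 * U t - 1) =O[atBot] fun _ => (1 : ℝ) :=
    (h.isBigO_one_U.const_mul_left _).sub (isBigO_refl _ _)
  have hcoef : (fun t => 2 * s t - 1) =O[atBot] fun _ => (1 : ℝ) :=
    (hs.const_mul_left _).sub (isBigO_refl _ _)
  have hsum : (fun t => (2 * U t - 1) * (2 * s t - 1) * V t +
      d t * matterFactor (s t) (U t) (V t)) =O[atBot] V := by
    have hquad := (hU.mul hcoef).mul (isBigO_refl V atBot)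
    have hH := hd.mul (h.isBigO_matterFactor hs)
    simp only [one_mul] at hquad hH
    exact hquad.add hH
  refine hsum.congr_left fun t => ?_
  rw [rateV]
  ring

lemma exists_neg_mul_le_deriv_V (h : InteriorOrbit l s d f U V Ω)
    (hs : s =O[atBot] fun _ => (1 : ℝ)) (hd : d =O[atBot] fun _ => (1 : ℝ)) :
    ∃ C, 0 ≤ C ∧
      ∀ᶠ t in atBot, -C * V t ≤ V t * (1 - V t) * rateV (s t) (d t) (U t) (V t) := by
  have hrate : (fun t => rateV (s t) (d t) (U t) (V t)) =O[atBot] fun _ => (1 : ℝ) := by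
    simpa using ((h.isBigO_rateV_sub hs hd).trans h.isBigO_one_V).add
      ((h.isBigO_one_U.const_mul_left 2).sub (isBigO_refl _ _))
  obtain ⟨C, hC, hle⟩ := hrate.exists_nonneg
  refine ⟨C, hC, hle.bound.mono fun t ht => ?_⟩
  obtain ⟨hV0, hV1⟩ := h.V_mem t
  rw [norm_one, mul_one, Real.norm_eq_abs] at ht
  have hweight : 0 ≤ V t * (1 - V t) := mul_nonneg hV0.le (sub_nonneg.2 hV1.le)
  calc -C * V t ≤ V t * (1 - V t) * -C := by linarith [mul_nonneg hC (mul_self_nonneg (V t))]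
    _ ≤ V t * (1 - V t) * rateV (s t) (d t) (U t) (V t) :=
        mul_le_mul_of_nonneg_left (abs_le.1 ht).1 hweight

lemma exists_mul_le_neg_deriv_Ω (h : InteriorOrbit l s d f U V Ω) {s₀ f₀ a : ℝ} (hs₀ : 0 < s₀)
    (hs : ∀ᶠ t in atBot, s₀ ≤ s t) (hf₀ : 0 < f₀) (hf : ∀ᶠ t in atBot, f₀ ≤ f t)
    (ha : a ∈ Ioo (0 : ℝ) 1) (hΩ : Tendsto Ω atBot (𝓝 a)) :
    ∃ c, 0 < c ∧ ∀ᶠ t in atBot,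
      c * V t ≤ - -(Ω t * (1 - Ω t) * f t * matterFactor (s t) (U t) (V t)) := by
  have hb : 0 < a * (1 - a) := mul_pos ha.1 (sub_pos.2 ha.2)
  refine ⟨a * (1 - a) / 2 * f₀ * min 1 s₀,
    mul_pos (mul_pos (half_pos hb) hf₀) (lt_min one_pos hs₀), ?_⟩
  filter_upwards [hs, hf, (hΩ.mul (hΩ.const_sub 1)).eventually_const_lt (half_lt_self hb)]
    with t hst hft hΩt
  have hV0 := (h.V_mem t).1
  have hΩ0 : 0 ≤ Ω t * (1 - Ω t) := (half_pos hb).le.trans hΩt.le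
  have hf0 : 0 ≤ f t := hf₀.le.trans hft
  have hH : min 1 s₀ * V t ≤ matterFactor (s t) (U t) (V t) :=
    (mul_le_mul_of_nonneg_right (min_le_min_left 1 hst) hV0.le).trans
      (min_mul_le_matterFactor (Ioo_subset_Icc_self (h.U_mem t)) hV0.le)
  calc a * (1 - a) / 2 * f₀ * min 1 s₀ * V t = a * (1 - a) / 2 * f₀ * (min 1 s₀ * V t) :=
        mul_assoc _ _ _
    _ ≤ Ω t * (1 - Ω t) * f t * matterFactor (s t) (U t) (V t) := by gcongr
    _ = - -(Ω t * (1 - Ω t) * f t * matterFactor (s t) (U t) (V t)) := (neg_neg _).symm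

theorem tendsto_V (h : InteriorOrbit l s d f U V Ω) {s₀ f₀ a : ℝ}
    (hs : s =O[atBot] fun _ => (1 : ℝ)) (hd : d =O[atBot] fun _ => (1 : ℝ)) (hs₀ : 0 < s₀)
    (hs_ge : ∀ᶠ t in atBot, s₀ ≤ s t) (hf₀ : 0 < f₀) (hf_ge : ∀ᶠ t in atBot, f₀ ≤ f t)
    (ha : a ∈ Ioo (0 : ℝ) 1) (hΩ : Tendsto Ω atBot (𝓝 a)) : Tendsto V atBot (𝓝 0) := by
  obtain ⟨C, hC, hV'⟩ := h.exists_neg_mul_le_deriv_V hs hd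
  obtain ⟨c, hc, hΩ'⟩ := h.exists_mul_le_neg_deriv_Ω hs₀ hs_ge hf₀ hf_ge ha hΩ
  exact tendsto_zero_atBot_of_mul_le_neg_deriv hc hC h.hasDerivAt_V h.hasDerivAt_Ω
    (fun t => (h.V_mem t).1.le) hV' hΩ' hΩ

lemma not_tendsto_U_zero (h : InteriorOrbit l s d f U V Ω)
    (hs : s =O[atBot] fun _ => (1 : ℝ)) (hd : d =O[atBot] fun _ => (1 : ℝ))
    (hV : Tendsto V atBot (𝓝 0)) : ¬ Tendsto U atBot (𝓝 0) := by
  intro hU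
  have hrate : Tendsto (fun t => rateV (s t) (d t) (U t) (V t)) atBot (𝓝 (-1)) := by
    simpa using ((h.isBigO_rateV_sub hs hd).trans_tendsto hV).add ((hU.const_mul 2).sub_const 1)
  refine not_tendsto_zero_atBot_of_deriv_nonpos h.hasDerivAt_V (fun t => (h.V_mem t).1) ?_ hV
  filter_upwards [hrate.eventually_lt_const neg_one_lt_zero] with t ht
  exact mul_nonpos_of_nonneg_of_nonpos
    (mul_nonneg (h.V_mem t).1.le (sub_nonneg.2 (h.V_mem t).2.le)) ht.le

theorem eq_one_or_eq_of_mapClusterPt_U (h : InteriorOrbit l s d f U V Ω) {u : ℝ}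
    (hl : -(3 / 2) < l) (hs : s =O[atBot] fun _ => (1 : ℝ)) (hd : d =O[atBot] fun _ => (1 : ℝ))
    (hV : Tendsto V atBot (𝓝 0)) (hu : MapClusterPt u atBot U) :
    u = 1 ∨ u = (3 + 2 * l) / (4 + 2 * l) := by
  rcases tendsto_or_eq_of_mapClusterPt_of_logistic h.hasDerivAt_U h.U_mem
    ((h.isBigO_rateU_sub hs hd).trans_tendsto hV) (by linarith) (by linarith) hu
    with hzero | heq | hone
  · exact absurd hzero (h.not_tendsto_U_zero hs hd hV)
  · exact .inr heq
  · exact .inl (eq_of_mapClusterPt_of_tendsto hu hone)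

end InteriorOrbit

/-! ### The Einstein–Vlasov system -/

lemma exists_pos_tendsto_of_antitone_of_le_lt_one {ω ω' E Ω : ℝ → ℝ} {c a : ℝ} (hc : 0 < c)
    (hω : ∀ η, 0 < η → HasDerivAt ω (ω' η) η) (hω0 : ∀ η, 0 < η → 0 < ω η)
    (hω' : ∀ η, 0 < η → c * ω η ≤ ω' η) (hE : ∀ t, 0 < E t)
    (hΩdef : ∀ t, Ω t = ω (E t) / (1 + ω (E t))) (hΩ : Antitone Ω)
    (hle : ∀ t, Ω t ≤ a) (ha : a < 1) : ∃ η > 0, Tendsto E atBot (𝓝 η) := by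
  have hcomp : Ω = fun t => ω (E t) / (1 + ω (E t)) := funext hΩdef
  refine exists_pos_tendsto_atBot_of_antitone_comp (g := fun η => ω η / (1 + ω η))
    (strictMonoOn_div_one_add.comp (strictMonoOn_Ioi_of_mul_le_deriv hc hω hω0 hω') hω0)
    (tendsto_div_one_add_atTop.comp (tendsto_atTop_of_mul_le_deriv hc hω hω0 hω')) hE
    (hcomp ▸ hΩ) (fun t => ?_) ha
  rw [← hΩdef]
  exact hle t

lemma div_mul_le_of_le_mul_div {σ S w w' f₀ : ℝ} (hσ : σ ∈ Ioc 0 S) (hw : 0 < w) (hf₀ : 0 ≤ f₀)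
    (hf : f₀ ≤ σ * (w' / w)) : f₀ / S * w ≤ w' := by
  have hlog : 0 ≤ w' / w := nonneg_of_mul_nonneg_right (hf₀.trans hf) hσ.1
  have hS : 0 < S := hσ.1.trans_le hσ.2
  rw [← le_div_iff₀ hw, div_le_iff₀' hS]
  exact hf.trans (mul_le_mul_of_nonneg_right hσ.2 hlog)

theorem stmt7_general {l S Flo : ℝ} (hl : -(3 / 2) < l) {σ σ' ω ω' F : ℝ → ℝ}
    (hσderiv : ∀ η, 0 < η → HasDerivAt σ (σ' η) η) (hσ'cont : ContinuousOn σ' (Ioi 0))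
    (hσrange : ∀ η, 0 < η → σ η ∈ Ioc 0 S)
    (hωderiv : ∀ η, 0 < η → HasDerivAt ω (ω' η) η) (hωpos : ∀ η, 0 < η → 0 < ω η)
    (hFdef : ∀ η, 0 < η → F η = σ η * (ω' η / ω η)) (hFlo : 0 < Flo)
    (hFge : ∀ η, 0 < η → Flo ≤ F η) {U V E Ω : ℝ → ℝ} (hE : ∀ t, 0 < E t)
    (hΩdef : ∀ t, Ω t = ω (E t) / (1 + ω (E t)))
    (h : InteriorOrbit l (fun t => σ (E t)) (fun t => σ' (E t)) (fun t => F (E t)) U V Ω)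
    {p : ℝ × ℝ × ℝ} (hp : MapClusterPt p atBot fun t => (U t, V t, Ω t)) :
    p.2.2 = 1 ∨
    (p.1 = 1 ∧ p.2.1 = 0 ∧ p.2.2 ∈ Ioo (0 : ℝ) 1) ∨
    (p.1 = (3 + 2 * l) / (4 + 2 * l) ∧ p.2.1 = 0 ∧ p.2.2 ∈ Ioo (0 : ℝ) 1) := by
  have hpU : MapClusterPt p.1 atBot U := hp.continuousAt_comp continuousAt_fst
  have hpV : MapClusterPt p.2.1 atBot V := hp.continuousAt_comp (f := fun x => x.2.1) (by fun_prop)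
  have hpΩ : MapClusterPt p.2.2 atBot Ω := hp.continuousAt_comp (f := fun x => x.2.2) (by fun_prop)
  have hanti : Antitone Ω :=
    h.antitone_Ω (fun t => (hσrange _ (hE t)).1) fun t => hFlo.le.trans (hFge _ (hE t))
  have hΩ : Tendsto Ω atBot (𝓝 p.2.2) := tendsto_atBot_of_antitone_of_mapClusterPt hanti
    ⟨1, forall_mem_range.2 fun t => (h.Ω_mem t).2.le⟩ hpΩ
  refine or_iff_not_imp_left.2 fun hne => ?_
  have hmem : p.2.2 ∈ Ioo (0 : ℝ) 1 := ⟨(h.Ω_mem 0).1.trans_le (hanti.ge_of_tendsto hΩ 0),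
    lt_of_le_of_ne (le_of_tendsto' hΩ fun t => (h.Ω_mem t).2.le) hne⟩
  have hS : 0 < S := (hσrange 1 one_pos).1.trans_le (hσrange 1 one_pos).2
  obtain ⟨η, hη, hElim⟩ := exists_pos_tendsto_of_antitone_of_le_lt_one (div_pos hFlo hS) hωderiv
    hωpos (fun η hη => div_mul_le_of_le_mul_div (hσrange η hη) (hωpos η hη) hFlo.le
      (hFdef η hη ▸ hFge η hη)) hE hΩdef hanti (hanti.ge_of_tendsto hΩ) hmem.2
  have hs : Tendsto (fun t => σ (E t)) atBot (𝓝 (σ η)) :=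
    (hσderiv η hη).continuousAt.tendsto.comp hElim
  have hd : Tendsto (fun t => σ' (E t)) atBot (𝓝 (σ' η)) :=
    (hσ'cont.continuousAt (Ioi_mem_nhds hη)).tendsto.comp hElim
  have hση : 0 < σ η := (hσrange η hη).1
  have hV : Tendsto V atBot (𝓝 0) := h.tendsto_V (hs.isBigO_one ℝ) (hd.isBigO_one ℝ)
    (half_pos hση) (hs.eventually_const_le (half_lt_self hση)) hFlo
    (.of_forall fun t => hFge _ (hE t)) hmem hΩ
  have hp0 : p.2.1 = 0 := eq_of_mapClusterPt_of_tendsto hpV hV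
  exact (h.eq_one_or_eq_of_mapClusterPt_U hl (hs.isBigO_one ℝ) (hd.isBigO_one ℝ) hV hpU).imp
    (⟨·, hp0, hmem⟩) (⟨·, hp0, hmem⟩)

/-- The α-limit set (as `λ → -∞`, in `[0,1]³`) of every interior orbit is contained in the union of the face `{Ω = 1}`, the line `L₁ = {(1,0,Ω₀) : Ω₀ ∈ (0,1)}` and the line `L₂ = {((3+2l)/(4+2l),0,Ω₀) : Ω₀ ∈ (0,1)}`. -/
theorem stmt7
    (l : ℝ) (hl : -1 < l)
    (σ σ' : ℝ → ℝ)
    (hσderiv : ∀ η : ℝ, 0 < η → HasDerivAt σ (σ' η) η)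
    (hσ'cont : ContinuousOn σ' (Ioi 0))
    (hσrange : ∀ η : ℝ, 0 < η → σ η ∈ Ioo 0 (1 / (3 + 2 * l)))
    (hσ0 : Tendsto σ (nhdsWithin 0 (Ioi 0)) (nhds 0))
    (k₁ k₂ : ℝ) (hk₁ : 0 < k₁) (hk₁₂ : k₁ < k₂)
    (hσ'near : ∃ η₀ > (0:ℝ), ∀ η ∈ Ioo (0:ℝ) η₀, σ' η ∈ Ioo k₁ k₂)
    (ω ω' : ℝ → ℝ)
    (hωsmooth : ContDiffOn ℝ (⊤ : ℕ∞) ω (Ioi 0))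
    (hωderiv : ∀ η : ℝ, 0 < η → HasDerivAt ω (ω' η) η)
    (hωpos : ∀ η : ℝ, 0 < η → 0 < ω η)
    (hωmono : StrictMonoOn ω (Ioi 0))
    (hω0 : Tendsto ω (nhdsWithin 0 (Ioi 0)) (nhds 0))
    (F : ℝ → ℝ) (hFdef : ∀ η : ℝ, 0 < η → F η = σ η * (ω' η / ω η))
    (Flo Fhi : ℝ) (hFlo : 0 < Flo)
    (hFbounds : ∀ η : ℝ, 0 < η → F η ∈ Icc Flo Fhi)
    (U V E Ω : ℝ → ℝ)
    (hΩdef : ∀ t : ℝ, Ω t = ω (E t) / (1 + ω (E t)))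
    (hU : ∀ t : ℝ, U t ∈ Ioo (0:ℝ) 1) (hV : ∀ t : ℝ, V t ∈ Ioo (0:ℝ) 1)
    (hE : ∀ t : ℝ, 0 < E t) (hEcont : Continuous E)
    (hUode : ∀ t : ℝ, HasDerivAt U
      (U t * (1 - U t) * ((3 + 2 * l - (4 + 2 * l) * U t) * (1 - V t)
        - (1 + σ (E t) - σ' (E t)) * ((1 - U t + σ (E t) * U t) * V t))) t)
    (hVode : ∀ t : ℝ, HasDerivAt V
      (V t * (1 - V t) * ((2 * U t - 1) * (1 - V t + 2 * σ (E t) * V t)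
        + σ' (E t) * ((1 - U t + σ (E t) * U t) * V t))) t)
    (hΩode : ∀ t : ℝ, HasDerivAt Ω
      (-(Ω t * (1 - Ω t) * F (E t) * ((1 - U t + σ (E t) * U t) * V t))) t) :
    ∀ p : ℝ × ℝ × ℝ,
      (∃ tn : ℕ → ℝ, Tendsto tn atTop atBot ∧
        Tendsto (fun j => (U (tn j), V (tn j), Ω (tn j))) atTop (nhds p)) →
      p.2.2 = 1 ∨
      (p.1 = 1 ∧ p.2.1 = 0 ∧ p.2.2 ∈ Ioo (0:ℝ) 1) ∨
      (p.1 = (3 + 2 * l) / (4 + 2 * l) ∧ p.2.1 = 0 ∧ p.2.2 ∈ Ioo (0:ℝ) 1) := by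
  rintro p ⟨tn, htn, hp⟩
  exact stmt7_general (by linarith) hσderiv hσ'cont
    (fun η hη => Ioo_subset_Ioc_self (hσrange η hη)) hωderiv hωpos hFdef hFlo
    (fun η hη => (hFbounds η hη).1) hE hΩdef
    ⟨hU, hV, fun t => hΩdef t ▸ div_one_add_mem_Ioo (hωpos _ (hE t)), hUode, hVode, hΩode⟩
    (hp.mapClusterPt.of_comp htn)
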